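/- Let m ≡ 0 (mod 4) and let e be an integer with 1 ≤ e ≤ m/2 and gcd(m,e) = 2. Then the number of codewords of Hamming weight 4 in the extended code C̄_E equals Ā_4 = 2^m(2^m − 1)/12. -/

import Mathlib

open Polynomial Finset

/-- The polynomial `c₀ + c₁x + ⋯ + c_{n−1}x^{n−1}` associated to a vector. -/
noncomputable def codePoly {n : ℕ} (c : Fin n → ZMod 2) : Polynomial (ZMod 2) :=
  ∑ i : Fin n, Polynomial.C (c i) * Polynomial.X ^ (i : ℕ)

/-- The generator polynomial `g_E(x) = M_α(x) · M_{α^{1+2^e}}(x)`. -/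
noncomputable def gE (m e : ℕ) (α : GaloisField 2 m) : Polynomial (ZMod 2) :=
  minpoly (ZMod 2) α * minpoly (ZMod 2) (α ^ (1 + 2 ^ e))

/-- The binary cyclic code `C_E` of length `2^m − 1` with generator polynomial `g_E`. -/
def CE (m e : ℕ) (α : GaloisField 2 m) : Set (Fin (2 ^ m - 1) → ZMod 2) :=
  {c | gE m e α ∣ codePoly c}

/-- The extended code `C̄_E ⊆ F_2^{2^m}`: the first `2^m − 1` coordinates form a codeword
of `C_E` and all `2^m` coordinates sum to zero. -/
def CEbar (m e : ℕ) (α : GaloisField 2 m) : Set (Fin (2 ^ m) → ZMod 2) :=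
  {c | (fun i : Fin (2 ^ m - 1) => c (Fin.castLE (Nat.sub_le _ _) i)) ∈ CE m e α ∧
       ∑ i, c i = 0}

/-!
Label the coordinates of the extended code by the elements of `F = F_{2^m}`: the first `2^m − 1`
by the powers of `α`, the last one by `0`. A word of weight four lies in `C̄_E` iff the four
labels `x` of its support satisfy `∑ x = 0` and `∑ x^{1+2^e} = 0`. This system is invariant under
the affine maps `u ↦ x + u d`, which act transitively on ordered pairs of distinct points, so every
pair of points lies in as many solutions as the pair `0, 1`. The solutions through `0, 1` are the
sets `{0, 1, t, t + 1}` with `t^{2^e} = t` and `t ≠ 0, 1`, each arising from both `t` and `t + 1`,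
and the `t ∈ F` with `t^{2^e} = t` form the subfield of order `2^{gcd(m, e)}`.
-/

section FiniteField

variable {F : Type*} [Field F]

theorem card_filter_pow_eq_self [Fintype F] [DecidableEq F] {n : ℕ} (hn : n ≠ 0) :
    #{t : F | t ^ n = t} = (Fintype.card F - 1).gcd (n - 1) + 1 := by
  have hunits : #{u : Fˣ | u ^ (n - 1) = 1} = (Fintype.card F - 1).gcd (n - 1) := by
    rw [← Fintype.card_units, ← Nat.card_eq_fintype_card (α := Fˣ),
      ← IsCyclic.card_powMonoidHom_ker, Nat.card_eq_fintype_card, Fintype.card_subtype]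
    simp only [MonoidHom.mem_ker, powMonoidHom_apply]
  have hsplit : ({t : F | t ^ n = t} : Finset F) =
      insert 0 (({u : Fˣ | u ^ (n - 1) = 1} : Finset Fˣ).map ⟨Units.val, Units.val_injective⟩) := by
    ext t
    rcases eq_or_ne t 0 with rfl | ht
    · simp [hn]
    · lift t to Fˣ using ht.isUnit
      have hpow : t ^ n = t ↔ t ^ (n - 1) = 1 := by
        rw [← pow_sub_one_mul hn, mul_eq_right]
      simpa [← Units.val_pow_eq_pow_val, Units.val_inj] using hpow
  rw [hsplit, card_insert_of_notMem (by simp), card_map, hunits]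

theorem card_filter_pow_pow_eq_self [Fintype F] [DecidableEq F] {q m : ℕ}
    (hF : Fintype.card F = q ^ m) (e : ℕ) : #{t : F | t ^ q ^ e = t} = q ^ m.gcd e := by
  have hq : 0 < q := by
    by_contra! hq
    have hcard := hF ▸ Fintype.one_lt_card (α := F)
    exact hcard.not_ge (pow_le_one₀ q.zero_le (hq.trans zero_le_one))
  rw [card_filter_pow_eq_self (pow_pos hq e).ne', hF, Nat.pow_sub_one_gcd_pow_sub_one,
    Nat.sub_add_cancel (Nat.one_le_pow _ _ hq)]

theorem exists_lt_orderOf_pow_eq [Finite F] {α x : F} (hα : orderOf α = Nat.card F - 1)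
    (hx : x ≠ 0) : ∃ k < orderOf α, α ^ k = x := by
  have := Fintype.ofFinite F
  have hcard := Finite.one_lt_card (α := F)
  have : NeZero (orderOf α) := ⟨by omega⟩
  refine (IsPrimitiveRoot.orderOf α).eq_pow_of_pow_eq_one ?_
  rw [hα, Nat.card_eq_fintype_card, FiniteField.pow_card_sub_one_eq_one x hx]

/-- As `α` is primitive, `σ` is the map `x ↦ x ^ (1 + 2 ^ e)`; comparing both sides of
`σ (α + 1) = σ α + 1` leaves `α ^ 2 ^ e + α = 0`. -/
theorem pow_two_pow_eq_self_of_map_eq [Finite F] [CharP F 2] {α : F} {e : ℕ}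
    (hα : orderOf α = Nat.card F - 1) (σ : F →+* F) (hσ : σ α = α ^ (1 + 2 ^ e)) :
    α ^ 2 ^ e = α := by
  have hσ_pow (x : F) : σ x = x ^ (1 + 2 ^ e) := by
    rcases eq_or_ne x 0 with rfl | hx
    · simp
    · obtain ⟨k, -, rfl⟩ := exists_lt_orderOf_pow_eq hα hx
      rw [map_pow, hσ, pow_right_comm]
  have hadd := map_add σ α 1
  rw [hσ_pow, hσ, map_one, pow_add, pow_add, pow_one, pow_one, add_pow_char_pow, one_pow] at hadd
  exact CharTwo.add_eq_zero.1 (by linear_combination hadd)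

theorem not_isConjRoot_pow_one_add_two_pow {K : Type*} [Field K] [Algebra K F] [Normal K F]
    [Finite F] [CharP F 2] {m e : ℕ} (hF : Nat.card F = 2 ^ m) (he : ¬ m ∣ e) {α : F}
    (hα : orderOf α = 2 ^ m - 1) : ¬ IsConjRoot K (α ^ (1 + 2 ^ e)) α := by
  intro hconj
  obtain ⟨σ, hσ⟩ := hconj.exists_algEquiv
  have hfix : α ^ 2 ^ e = α := pow_two_pow_eq_self_of_map_eq (hF ▸ hα) σ hσ
  have hα0 : α ≠ 0 := by
    rintro rfl
    have hcard := Finite.one_lt_card (α := F)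
    rw [orderOf_zero] at hα
    omega
  have hdvd : 2 ^ m - 1 ∣ 2 ^ e - 1 := by
    rw [← hα, orderOf_dvd_iff_pow_eq_one]
    exact mul_right_cancel₀ hα0 (by rw [pow_sub_one_mul (by simp), hfix, one_mul])
  have hgcd : 2 ^ m.gcd e - 1 = 2 ^ m - 1 := by
    rw [← Nat.pow_sub_one_gcd_pow_sub_one, Nat.gcd_eq_left hdvd]
  have hpow : 2 ^ m.gcd e = 2 ^ m := by
    rwa [tsub_left_inj Nat.one_le_two_pow Nat.one_le_two_pow] at hgcd
  exact he (Nat.gcd_eq_left_iff_dvd.1 (Nat.pow_right_injective le_rfl hpow))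

theorem isCoprime_minpoly_of_not_isConjRoot {K : Type*} [Field K] [Algebra K F] {x y : F}
    (hx : IsIntegral K x) (hy : IsIntegral K y) (h : ¬ IsConjRoot K y x) :
    IsCoprime (minpoly K x) (minpoly K y) := by
  rwa [(minpoly.irreducible hx).coprime_iff_not_dvd, minpoly.dvd_iff,
    ← isConjRoot_iff_aeval_eq_zero hy]

end FiniteField

section Quadruples

theorem sum_add_mul_pow_one_add_pow {R ι : Type*} [CommRing R] (p : ℕ) [ExpChar R p]
    {s : Finset ι} {f : ι → R} (hs : (#s : R) = 0) (hf : ∑ i ∈ s, f i = 0) (x d : R) (e : ℕ) :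
    ∑ i ∈ s, (x + f i * d) ^ (1 + p ^ e) = (∑ i ∈ s, f i ^ (1 + p ^ e)) * d ^ (1 + p ^ e) := by
  have hfp : ∑ i ∈ s, f i ^ p ^ e = 0 := by
    rw [← sum_pow_char_pow, hf, zero_pow (pow_ne_zero _ (expChar_ne_zero R p))]
  have hexpand (i : ι) : (x + f i * d) ^ (1 + p ^ e) = x ^ (1 + p ^ e)
      + x * d ^ p ^ e * f i ^ p ^ e + x ^ p ^ e * d * f i
      + f i ^ (1 + p ^ e) * d ^ (1 + p ^ e) := by
    simp only [pow_add _ 1, pow_one, add_pow_expChar_pow, mul_pow]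
    ring
  simp only [hexpand, sum_add_distrib, ← mul_sum, ← sum_mul, hf, hfp, sum_const, nsmul_eq_mul, hs]
  ring

variable {F : Type*} [Field F] [Fintype F] [DecidableEq F]

variable (F) in
/-- The four-element subsets of `F` on which the power sums of degrees `1` and `1 + 2 ^ e` vanish.
For `F = F_{2^m}` they are the supports of the codewords of weight four of `C̄_E`, once
coordinates are replaced by their locators. -/
def zeroSumQuadruples (e : ℕ) : Finset (Finset F) :=
  {S ∈ powersetCard 4 univ | ∑ x ∈ S, x = 0 ∧ ∑ x ∈ S, x ^ (1 + 2 ^ e) = 0}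

variable {e : ℕ}

theorem mem_zeroSumQuadruples {S : Finset F} : S ∈ zeroSumQuadruples F e ↔
    #S = 4 ∧ ∑ x ∈ S, x = 0 ∧ ∑ x ∈ S, x ^ (1 + 2 ^ e) = 0 := by
  simp [zeroSumQuadruples]

variable [CharP F 2]

theorem map_affine_mem_zeroSumQuadruples_iff (x : F) {d : F} (hd : d ≠ 0) {S : Finset F} :
    S.map ((Equiv.mulRight₀ d hd).trans (Equiv.addLeft x)).toEmbedding ∈ zeroSumQuadruples F e ↔
      S ∈ zeroSumQuadruples F e := by
  have h4 : (4 : F) = 0 := by linear_combination 2 * (CharTwo.two_eq_zero : (2 : F) = 0)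
  simp only [mem_zeroSumQuadruples, card_map, sum_map, Equiv.coe_toEmbedding, Equiv.trans_apply,
    Equiv.mulRight₀_apply, Equiv.coe_addLeft]
  refine and_congr_right fun hS ↦ ?_
  have hcard : (#S : F) = 0 := by rw [hS, Nat.cast_ofNat, h4]
  have hsum : ∑ u ∈ S, (x + u * d) = (∑ u ∈ S, u) * d := by
    rw [sum_add_distrib, sum_const, nsmul_eq_mul, hcard, zero_mul, zero_add, sum_mul]
  rw [hsum, mul_eq_zero_iff_right hd]
  refine and_congr_right fun hS₁ ↦ ?_
  rw [sum_add_mul_pow_one_add_pow 2 hcard hS₁, mul_eq_zero_iff_right (pow_ne_zero _ hd)]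

theorem card_zeroSumQuadruples_through {x y : F} (hxy : x ≠ y) :
    #{S ∈ zeroSumQuadruples F e | x ∈ S ∧ y ∈ S} =
      #{S ∈ zeroSumQuadruples F e | 0 ∈ S ∧ 1 ∈ S} := by
  have hd : y - x ≠ 0 := sub_ne_zero.2 hxy.symm
  let σ : F ≃ F := (Equiv.mulRight₀ (y - x) hd).trans (Equiv.addLeft x)
  have hσ0 : σ.symm x = 0 := σ.symm_apply_eq.2 (by simp [σ])
  have hσ1 : σ.symm y = 1 := σ.symm_apply_eq.2 (by simp [σ])
  refine (card_equiv σ.finsetCongr fun S ↦ ?_).symm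
  simp only [mem_filter, Equiv.finsetCongr_apply, mem_map_equiv, hσ0, hσ1]
  rw [map_affine_mem_zeroSumQuadruples_iff x hd]

theorem eq_of_mem_zeroSumQuadruples {S : Finset F} (hS : S ∈ zeroSumQuadruples F e) (h0 : 0 ∈ S)
    (h1 : 1 ∈ S) {t : F} (ht : t ∈ S) (ht0 : t ≠ 0) (ht1 : t ≠ 1) : S = {0, 1, t, t + 1} := by
  obtain ⟨hcard, hsum, -⟩ := mem_zeroSumQuadruples.1 hS
  have hsub : {0, 1, t} ⊆ S := by simp [insert_subset_iff, h0, h1, ht]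
  have hthree : #{0, 1, t} = 3 := card_eq_three.2 ⟨0, 1, t, zero_ne_one, ht0.symm, ht1.symm, rfl⟩
  obtain ⟨s, hs⟩ : ∃ s, S \ {0, 1, t} = {s} :=
    card_eq_one.1 (by rw [card_sdiff_of_subset hsub, hcard, hthree])
  have hst : s = t + 1 := by
    rw [← sum_sdiff hsub, hs, sum_singleton, sum_insert (by simp [ht0.symm]), sum_pair ht1.symm,
      zero_add, add_comm 1] at hsum
    exact CharTwo.add_eq_zero.1 hsum
  rw [← sdiff_union_of_subset hsub, hs, hst]
  ext
  simp only [mem_union, mem_insert, mem_singleton]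
  tauto

theorem insert_mem_zeroSumQuadruples_iff {t : F} (ht0 : t ≠ 0) (ht1 : t ≠ 1) :
    {0, 1, t, t + 1} ∈ zeroSumQuadruples F e ↔ t ^ 2 ^ e = t := by
  have h2 : (2 : F) = 0 := CharTwo.two_eq_zero
  have h0_notMem : 0 ∉ ({1, t, t + 1} : Finset F) := by
    simpa [ht0.symm, eq_comm (a := (0 : F)), CharTwo.add_eq_zero] using ht1
  have h1_notMem : 1 ∉ ({t, t + 1} : Finset F) := by simp [ht0, ht1.symm]
  have ht_notMem : t ∉ ({t + 1} : Finset F) := by simp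
  have hsum : 0 + (1 + (t + (t + 1))) = 0 := by linear_combination (1 + t) * h2
  have hpow : 0 ^ (1 + 2 ^ e) + (1 ^ (1 + 2 ^ e) + (t ^ (1 + 2 ^ e) + (t + 1) ^ (1 + 2 ^ e))) =
      t ^ 2 ^ e + t := by
    simp only [pow_add _ 1, pow_one, add_pow_char_pow, one_pow]
    linear_combination (1 + t * t ^ 2 ^ e) * h2
  simp only [mem_zeroSumQuadruples, card_insert_of_notMem, sum_insert, h0_notMem, h1_notMem,
    ht_notMem, not_false_eq_true, card_singleton, sum_singleton, hsum, hpow, true_and,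
    CharTwo.add_eq_zero]

theorem two_mul_card_zeroSumQuadruples_through_zero_one {m : ℕ} (hF : Fintype.card F = 2 ^ m) :
    2 * #{S ∈ zeroSumQuadruples F e | 0 ∈ S ∧ 1 ∈ S} = 2 ^ m.gcd e - 2 := by
  set T : Finset F := ({t : F | t ^ 2 ^ e = t} : Finset F) \ {0, 1}
  have hT : #T = 2 ^ m.gcd e - 2 := by
    rw [card_sdiff_of_subset (by simp [insert_subset_iff]), card_filter_pow_pow_eq_self hF,
      card_pair zero_ne_one]
  have hmemT {t : F} : t ∈ T ↔ t ^ 2 ^ e = t ∧ t ≠ 0 ∧ t ≠ 1 := by simp [T]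
  rw [← hT, mul_comm, ← mul_one #T]
  refine (card_mul_eq_card_mul (fun t S ↦ t ∈ S) (fun t ht ↦ ?_) fun S hS ↦ ?_).symm
  · obtain ⟨htq, ht0, ht1⟩ := hmemT.1 ht
    refine card_eq_one.2 ⟨{0, 1, t, t + 1}, eq_singleton_iff_unique_mem.2 ⟨?_, fun S hS ↦ ?_⟩⟩
    · simpa [bipartiteAbove] using (insert_mem_zeroSumQuadruples_iff ht0 ht1).2 htq
    · simp only [mem_bipartiteAbove, mem_filter] at hS
      exact eq_of_mem_zeroSumQuadruples hS.1.1 hS.1.2.1 hS.1.2.2 hS.2 ht0 ht1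
  · obtain ⟨hSQ, h0, h1⟩ := mem_filter.1 hS
    have hTS : T.bipartiteBelow (fun t S ↦ t ∈ S) S = S \ {0, 1} := by
      ext t
      simp only [mem_bipartiteBelow, hmemT, mem_sdiff, mem_insert, mem_singleton, not_or]
      refine ⟨fun h ↦ ⟨h.2, h.1.2⟩, fun ⟨htS, ht0, ht1⟩ ↦ ⟨⟨?_, ht0, ht1⟩, htS⟩⟩
      rw [← insert_mem_zeroSumQuadruples_iff ht0 ht1,
        ← eq_of_mem_zeroSumQuadruples hSQ h0 h1 htS ht0 ht1]
      exact hSQ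
    rw [hTS, card_sdiff_of_subset (by simp [insert_subset_iff, h0, h1]), card_pair zero_ne_one,
      (mem_zeroSumQuadruples.1 hSQ).1]

theorem twelve_mul_card_zeroSumQuadruples :
    12 * #(zeroSumQuadruples F e) = Fintype.card F * (Fintype.card F - 1) *
      #{S ∈ zeroSumQuadruples F e | 0 ∈ S ∧ 1 ∈ S} := by
  have hpairs : #(univ : Finset F).offDiag = Fintype.card F * (Fintype.card F - 1) := by
    rw [offDiag_card, card_univ, Nat.mul_sub, mul_one]
  rw [← hpairs, mul_comm]
  refine (card_mul_eq_card_mul (fun p S ↦ p.1 ∈ S ∧ p.2 ∈ S) (fun p hp ↦ ?_) fun S hS ↦ ?_).symm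
  · exact card_zeroSumQuadruples_through (mem_offDiag.1 hp).2.2
  · have hSpairs : (univ : Finset F).offDiag.bipartiteBelow (fun p S ↦ p.1 ∈ S ∧ p.2 ∈ S) S =
        S.offDiag := by
      ext p
      simp only [mem_bipartiteBelow, mem_offDiag, mem_univ, true_and]
      tauto
    rw [hSpairs, offDiag_card, (mem_zeroSumQuadruples.1 hS).1]

theorem card_zeroSumQuadruples {m : ℕ} (hF : Fintype.card F = 2 ^ m) (hgcd : m.gcd e ≠ 0) :
    12 * #(zeroSumQuadruples F e) = 2 ^ m * (2 ^ m - 1) * (2 ^ (m.gcd e - 1) - 1) := by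
  have h := two_mul_card_zeroSumQuadruples_through_zero_one (e := e) hF
  have hpow : 2 ^ m.gcd e = 2 * 2 ^ (m.gcd e - 1) := (mul_pow_sub_one hgcd 2).symm
  rw [twelve_mul_card_zeroSumQuadruples, hF]
  congr 1
  omega

end Quadruples

section Locators

theorem aeval_codePoly {A : Type*} [CommRing A] [Algebra (ZMod 2) A] {n : ℕ} (c : Fin n → ZMod 2)
    (x : A) : aeval x (codePoly c) = ∑ i, algebraMap (ZMod 2) A (c i) * x ^ (i : ℕ) := by
  simp [codePoly]

variable {F : Type*} [Field F] {N : ℕ}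

/-- The label in `F` of a coordinate of the extended code of length `N = #F`: the first `N - 1`
coordinates are labelled by the powers of `α`, the parity coordinate by `0`. -/
def locator (α : F) (i : Fin N) : F :=
  if (i : ℕ) < N - 1 then α ^ (i : ℕ) else 0

theorem locator_bijective [Finite F] {α : F} (hF : Nat.card F = N) (hα : orderOf α = N - 1) :
    Function.Bijective (locator α : Fin N → F) := by
  have hN : 0 < N := hF ▸ Nat.card_pos
  refine Function.Surjective.bijective_of_nat_card_le (fun x ↦ ?_) (by simp [hF])
  rcases eq_or_ne x 0 with rfl | hx
  · exact ⟨⟨N - 1, by omega⟩, by simp [locator]⟩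
  · obtain ⟨k, hk, rfl⟩ := exists_lt_orderOf_pow_eq (hF ▸ hα) hx
    exact ⟨⟨k, by omega⟩, if_pos (hα ▸ hk)⟩

variable [DecidableEq F]

/-- The locators of the nonzero coordinates of a word. -/
def locatorSet (α : F) (c : Fin N → ZMod 2) : Finset F :=
  ({i | c i ≠ 0} : Finset (Fin N)).image (locator α)

theorem locatorSet_bijective {α : F} (hα : Function.Bijective (locator α : Fin N → F)) :
    Function.Bijective (locatorSet α : (Fin N → ZMod 2) → Finset F) := by
  have hmem (c : Fin N → ZMod 2) (i : Fin N) : locator α i ∈ locatorSet α c ↔ c i ≠ 0 := by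
    simp [locatorSet, hα.1.eq_iff]
  refine ⟨fun c d hcd ↦ funext fun i ↦ ?_, fun S ↦ ⟨fun i ↦ if locator α i ∈ S then 1 else 0, ?_⟩⟩
  · have hzero : ∀ a b : ZMod 2, (a ≠ 0 ↔ b ≠ 0) → a = b := by decide
    exact hzero _ _ (by rw [← hmem, ← hmem, hcd])
  · ext x
    obtain ⟨i, rfl⟩ := hα.2 x
    simp [hmem]

theorem card_locatorSet {α : F} (hα : Function.Injective (locator α : Fin N → F))
    (c : Fin N → ZMod 2) : #(locatorSet α c) = hammingNorm c :=
  card_image_of_injective _ hα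

theorem sum_locatorSet_pow [Algebra (ZMod 2) F] {α : F}
    (hα : Function.Injective (locator α : Fin N → F)) (c : Fin N → ZMod 2) {k : ℕ} (hk : k ≠ 0) :
    ∑ x ∈ locatorSet α c, x ^ k =
      aeval (α ^ k) (codePoly fun i : Fin (N - 1) ↦ c (Fin.castLE (Nat.sub_le _ _) i)) := by
  have hcoeff (a : ZMod 2) (x : F) : (if a ≠ 0 then x else 0) = algebraMap (ZMod 2) F a * x := by
    rcases (by decide +revert : a = 0 ∨ a = 1) with rfl | rfl <;> simp
  rw [locatorSet, sum_image hα.injOn, sum_filter]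
  simp only [hcoeff]
  cases N with
  | zero => simp [aeval_codePoly]
  | succ n =>
    have hlast : locator α (Fin.last n) = 0 := by simp [locator]
    have hcast (i : Fin n) : locator α i.castSucc = α ^ (i : ℕ) := by simp [locator]
    rw [Fin.sum_univ_castSucc, hlast, zero_pow hk, mul_zero, add_zero, aeval_codePoly]
    refine sum_congr rfl fun i _ ↦ ?_
    rw [hcast, pow_right_comm]
    rfl

end Locators

theorem sum_eq_hammingNorm {ι : Type*} [Fintype ι] (c : ι → ZMod 2) :
    ∑ i, c i = hammingNorm c := by
  have hindicator : ∀ a : ZMod 2, a = if a ≠ 0 then 1 else 0 := by decide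
  rw [sum_congr rfl fun i _ ↦ hindicator (c i), sum_boole, hammingNorm]

theorem gE_dvd_iff {m e : ℕ} (hm : m ≠ 0) (he : ¬ m ∣ e) {α : GaloisField 2 m}
    (hα : orderOf α = 2 ^ m - 1) (f : Polynomial (ZMod 2)) :
    gE m e α ∣ f ↔ aeval α f = 0 ∧ aeval (α ^ (1 + 2 ^ e)) f = 0 := by
  have hcop : IsCoprime (minpoly (ZMod 2) α) (minpoly (ZMod 2) (α ^ (1 + 2 ^ e))) :=
    isCoprime_minpoly_of_not_isConjRoot (Algebra.IsIntegral.isIntegral _)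
      (Algebra.IsIntegral.isIntegral _)
      (not_isConjRoot_pow_one_add_two_pow (GaloisField.card 2 m hm) he hα)
  rw [← minpoly.dvd_iff, ← minpoly.dvd_iff, gE]
  exact ⟨fun h ↦ ⟨dvd_of_mul_right_dvd h, dvd_of_mul_left_dvd h⟩, fun h ↦ hcop.mul_dvd h.1 h.2⟩

theorem mem_CEbar_and_hammingNorm_eq_four_iff {m e : ℕ} [Fintype (GaloisField 2 m)]
    [DecidableEq (GaloisField 2 m)] (hm : m ≠ 0) (he : ¬ m ∣ e) {α : GaloisField 2 m}
    (hα : orderOf α = 2 ^ m - 1) (c : Fin (2 ^ m) → ZMod 2) :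
    c ∈ CEbar m e α ∧ hammingNorm c = 4 ↔ locatorSet α c ∈ zeroSumQuadruples _ e := by
  have hinj := (locator_bijective (GaloisField.card 2 m hm) hα).1
  have hparity (h : hammingNorm c = 4) : ∑ i, c i = 0 := by
    rw [sum_eq_hammingNorm, h]
    rfl
  have hsum := sum_locatorSet_pow hinj c one_ne_zero
  simp only [pow_one] at hsum
  rw [mem_zeroSumQuadruples, card_locatorSet hinj, hsum, sum_locatorSet_pow hinj c (by simp),
    CEbar, Set.mem_ofPred_eq, CE, Set.mem_ofPred_eq, gE_dvd_iff hm he hα]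
  tauto

theorem number_of_weight_four_codewords_general (m e : ℕ) (hm : m ≠ 0) (he : ¬ m ∣ e)
    (α : GaloisField 2 m) (hα : orderOf α = 2 ^ m - 1) :
    12 * {c : Fin (2 ^ m) → ZMod 2 | c ∈ CEbar m e α ∧ hammingNorm c = 4}.ncard =
      2 ^ m * (2 ^ m - 1) * (2 ^ (m.gcd e - 1) - 1) := by
  classical
  have := Fintype.ofFinite (GaloisField 2 m)
  have hcard : Nat.card (GaloisField 2 m) = 2 ^ m := GaloisField.card 2 m hm
  have hbij := locatorSet_bijective (locator_bijective hcard hα)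
  have hpreimage : {c : Fin (2 ^ m) → ZMod 2 | c ∈ CEbar m e α ∧ hammingNorm c = 4} =
      locatorSet α ⁻¹' (zeroSumQuadruples (GaloisField 2 m) e : Set (Finset (GaloisField 2 m))) :=
    Set.ext (mem_CEbar_and_hammingNorm_eq_four_iff hm he hα)
  rw [hpreimage, Set.ncard_preimage_of_injective_subset_range hbij.1 (by simp [hbij.2.range_eq]),
    Set.ncard_coe_finset, card_zeroSumQuadruples (Fintype.card_eq_nat_card.trans hcard)
      (Nat.gcd_ne_zero_left hm)]

/-- For `m ≡ 0 (mod 4)` (with `m ≥ 4`) and `1 ≤ e ≤ m/2` with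
`gcd(m,e) = 2`, the number of weight-4 codewords of `C̄_E` is `Ā₄ = 2^m(2^m − 1)/12`. -/
theorem number_of_weight_four_codewords
    (m e : ℕ) (hm4 : m % 4 = 0) (hm : 4 ≤ m)
    (he1 : 1 ≤ e) (heM : 2 * e ≤ m) (hgcd : Nat.gcd m e = 2)
    (α : GaloisField 2 m) (hα : orderOf α = 2 ^ m - 1) :
    12 * {c : Fin (2 ^ m) → ZMod 2 | c ∈ CEbar m e α ∧ hammingNorm c = 4}.ncard =
      2 ^ m * (2 ^ m - 1) := by
  have he : ¬ m ∣ e := fun h ↦ by have := Nat.le_of_dvd he1 h; omega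
  simpa [hgcd] using number_of_weight_four_codewords_general m e (by omega) he α hα
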